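/- Let H = H_3 only (all other H_{2i+1} = 0) and let [x_p]_{2t+3} ∈ E_{2t+3}^{p,q} with t ≥ 1. Then d_{2t+3}[x_p]_{2t+3} = (−1)^t [⟨H_3,...,H_3,x_p⟩_A]_{2t+3}, where ⟨H_3,...,H_3,x_p⟩_A (t+1 copies of H_3) is the specific element [c(A)] of the (t+2)-fold Massey product for a defining system A obtained from the cup-product description of d_{2t+3}, and this class in E_{2t+3} is independent of the choice of such a defining system A. (This recovers the result of Atiyah and Segal.) -/

import Mathlib

section TwistedSetup

variable {W : Type} [Ring W] [Algebra ℝ W]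

/-- The filtration `K_p = ⊕_{i ≥ p} Ω^i(M)` of the (abstractly modelled) de Rham complex. -/
def Kfil (A : ℤ → Submodule ℝ W) (p : ℤ) : Submodule ℝ W :=
  ⨆ i : ℤ, ⨆ _ : p ≤ i, A i

/-- The submodule of (sums of) forms of pure parity `m (mod 2)`. -/
def ParPart (A : ℤ → Submodule ℝ W) (m : ℤ) : Submodule ℝ W :=
  ⨆ i : ℤ, ⨆ _ : i % 2 = m % 2, A i

/-- `Z_r^{p,q}`: elements of `K_p` of total parity `p + q` whose differential lies in `K_{p+r}`. -/
def Zcyc (A : ℤ → Submodule ℝ W) (D : W →ₗ[ℝ] W) (r : ℕ) (p q : ℤ) : Submodule ℝ W :=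
  Kfil A p ⊓ ParPart A (p + q) ⊓ (Kfil A (p + r)).comap D

/-- The boundaries `B_r^{p,q} = Z_{r-1}^{p+1,q-1} + D Z_{r-1}^{p-r+1,q+r-2}`. -/
def Bbd (A : ℤ → Submodule ℝ W) (D : W →ₗ[ℝ] W) (r : ℕ) (p q : ℤ) : Submodule ℝ W :=
  Zcyc A D (r - 1) (p + 1) (q - 1) ⊔ (Zcyc A D (r - 1) (p - r + 1) (q + r - 2)).map D

/-- The page `E_r^{p,q}` of the spectral sequence of the filtered complex `(Ω^*(M), D)`. -/
abbrev Epage (A : ℤ → Submodule ℝ W) (D : W →ₗ[ℝ] W) (r : ℕ) (p q : ℤ) : Type :=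
  ↥(Zcyc A D r p q) ⧸ (Bbd A D r p q).comap (Zcyc A D r p q).subtype

/-- The class `[z]_r ∈ E_r^{p,q}` of a cocycle `z ∈ Z_r^{p,q}`. -/
def pageCls (A : ℤ → Submodule ℝ W) (D : W →ₗ[ℝ] W) (r : ℕ) (p q : ℤ)
    (z : W) (hz : z ∈ Zcyc A D r p q) : Epage A D r p q :=
  Submodule.Quotient.mk ⟨z, hz⟩

open Classical in
noncomputable def dpageCore (A : ℤ → Submodule ℝ W) (D : W →ₗ[ℝ] W) (r : ℕ) (p q : ℤ) :
    Epage A D r p q →ₗ[ℝ] Epage A D r (p + r) (q - r + 1) :=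
  if h : (∀ x ∈ Zcyc A D r p q, D x ∈ Zcyc A D r (p + r) (q - r + 1)) ∧
      (∀ x ∈ Zcyc A D r p q, x ∈ Bbd A D r p q → D x ∈ Bbd A D r (p + r) (q - r + 1)) then
    Submodule.liftQ _
      (((Bbd A D r (p + r) (q - r + 1)).comap (Zcyc A D r (p + r) (q - r + 1)).subtype).mkQ.comp
        (LinearMap.codRestrict (Zcyc A D r (p + r) (q - r + 1))
          (D.comp (Zcyc A D r p q).subtype) (fun x => h.1 x x.2)))
      (by
        intro x hx
        simp only [Submodule.mem_comap] at hx
        simp only [LinearMap.mem_ker, LinearMap.comp_apply, Submodule.mkQ_apply,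
          Submodule.Quotient.mk_eq_zero, Submodule.mem_comap, LinearMap.codRestrict_apply,
          Submodule.subtype_apply]
        exact h.2 x x.2 hx)
  else 0

/-- The differential `d_r : E_r^{p,q} → E_r^{p+r,q-r+1}` of the spectral sequence,
induced by `D`. -/
noncomputable def dpage (A : ℤ → Submodule ℝ W) (D : W →ₗ[ℝ] W) (r : ℕ) (p q p' q' : ℤ)
    (hp : p' = p + r) (hq : q' = q - r + 1) :
    Epage A D r p q →ₗ[ℝ] Epage A D r p' q' := by
  subst hp; subst hq; exact dpageCore A D r p q

end TwistedSetup

section MasseySetup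

variable {W : Type} [Ring W] [Algebra ℝ W]

/-- The degree `r_i + r_{i+1} + ⋯ + r_j - j + i` of the entry `a_{i,j}` of a defining system. -/
def masseyDeg (rdeg : ℕ → ℤ) (i j : ℕ) : ℤ := (∑ k ∈ Finset.Icc i j, rdeg k) - j + i

/-- The sign occurring in `ā_{i,j} = (-1)^{1 + deg a_{i,j}} a_{i,j}`. -/
noncomputable def barSign (rdeg : ℕ → ℤ) (i j : ℕ) : ℝ := (-1 : ℝ) ^ (1 + masseyDeg rdeg i j)

/-- `a = (a_{i,j})`, `1 ≤ i ≤ j ≤ m`, `(i,j) ≠ (1,m)`, is a defining system for the `m`-fold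
Massey product `⟨z_1, …, z_m⟩` (with `z_i` of degree `rdeg i`):  `a_{i,j}` has degree
`r_i + ⋯ + r_j - j + i`, `a_{i,i} = z_i`, and `d a_{i,j} = ∑_{r=i}^{j-1} ā_{i,r} ∧ a_{r+1,j}`. -/
def IsDefiningSystem (A : ℤ → Submodule ℝ W) (d : W →ₗ[ℝ] W) (m : ℕ) (rdeg : ℕ → ℤ)
    (z : ℕ → W) (a : ℕ → ℕ → W) : Prop :=
  (∀ i j : ℕ, 1 ≤ i → i ≤ j → j ≤ m → (i, j) ≠ (1, m) → a i j ∈ A (masseyDeg rdeg i j)) ∧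
  (∀ i : ℕ, 1 ≤ i → i ≤ m → a i i = z i) ∧
  (∀ i j : ℕ, 1 ≤ i → i ≤ j → j ≤ m → (i, j) ≠ (1, m) →
    d (a i j) = ∑ r ∈ Finset.Icc i (j - 1), (barSign rdeg i r • a i r) * a (r + 1) j)

/-- The related cocycle `c(a) = ∑_{r=1}^{m-1} ā_{1,r} ∧ a_{r+1,m}` of a defining system. -/
noncomputable def relatedCocycle (rdeg : ℕ → ℤ) (m : ℕ) (a : ℕ → ℕ → W) : W :=
  ∑ r ∈ Finset.Icc 1 (m - 1), (barSign rdeg 1 r • a 1 r) * a (r + 1) m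

end MasseySetup

/-! Put `Y = y₀ + y₁ + ⋯ + y_t`, where `d y₀ = 0` and `d y_j = -H y_{j-1}`. The sum telescopes
under `D = d + H`, leaving `D Y = H y_t = (-1)^t c(a)`, so `c(a)` represents `(-1)^t d_r[Y]_r`.
A class on the page `E_r^{p,q}` depends only on its representative modulo `K_{p+1}`; hence `[Y]_r`
depends only on `y₀`, and neither side depends on the choice of the remaining `y_j`. -/

section Filtration

variable {W : Type} [Ring W] [Algebra ℝ W] {A : ℤ → Submodule ℝ W} {i m p : ℤ} {w : W}

theorem mem_Kfil_of_le (h : p ≤ i) (hw : w ∈ A i) : w ∈ Kfil A p :=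
  Submodule.mem_iSup_of_mem i (Submodule.mem_iSup_of_mem h hw)

theorem mem_ParPart_of_even_sub (h : Even (i - m)) (hw : w ∈ A i) : w ∈ ParPart A m :=
  have hmod : i % 2 = m % 2 :=
    Int.emod_eq_emod_iff_emod_sub_eq_zero.mpr (Int.even_iff.mp h)
  Submodule.mem_iSup_of_mem i (Submodule.mem_iSup_of_mem hmod hw)

end Filtration

section Pages

variable {W : Type} [Ring W] [Algebra ℝ W] {A : ℤ → Submodule ℝ W} {D : W →ₗ[ℝ] W}
  {r : ℕ} {p q p' q' : ℤ} {z z' : W}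

theorem mem_Zcyc_iff :
    z ∈ Zcyc A D r p q ↔ z ∈ Kfil A p ∧ z ∈ ParPart A (p + q) ∧ D z ∈ Kfil A (p + r) :=
  and_assoc

theorem pageCls_eq_of_sub_mem_Kfil (hr : 0 < r) (hz : z ∈ Zcyc A D r p q)
    (hz' : z' ∈ Zcyc A D r p q) (h : z - z' ∈ Kfil A (p + 1)) :
    pageCls A D r p q z hz = pageCls A D r p q z' hz' := by
  obtain ⟨-, hpar, hD⟩ := mem_Zcyc_iff.mp (sub_mem hz hz')
  refine (Submodule.Quotient.eq _).mpr
    (Submodule.mem_sup_left (mem_Zcyc_iff.mpr ⟨h, ?_, ?_⟩))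
  · rwa [show p + 1 + (q - 1) = p + q by ring]
  · rwa [show p + 1 + ((r - 1 : ℕ) : ℤ) = p + r by omega]

theorem map_mem_Zcyc (hodd : ∀ m, ∀ w ∈ ParPart A m, D w ∈ ParPart A (m + 1))
    (hDD : ∀ w, D (D w) = 0) (hp : p' = p + r) (hq : q' = q - r + 1)
    (hz : z ∈ Zcyc A D r p q) : D z ∈ Zcyc A D r p' q' := by
  obtain ⟨-, hpar, hD⟩ := mem_Zcyc_iff.mp hz
  refine mem_Zcyc_iff.mpr ⟨hp ▸ hD, ?_, ?_⟩
  · rw [show p' + q' = p + q + 1 by rw [hp, hq]; ring]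
    exact hodd _ _ hpar
  · rw [hDD]
    exact zero_mem _

theorem map_mem_Bbd (hDD : ∀ w, D (D w) = 0) (hp : p' = p + r) (hq : q' = q - r + 1)
    (hz : z ∈ Bbd A D r p q) : D z ∈ Bbd A D r p' q' := by
  obtain ⟨u, hu, _, ⟨v, -, rfl⟩, rfl⟩ := Submodule.mem_sup.mp hz
  refine Submodule.mem_sup_right ⟨u, ?_, by rw [map_add, hDD, add_zero]⟩
  rwa [show p' - r + 1 = p + 1 by rw [hp]; ring, show q' + r - 2 = q - 1 by rw [hq]; ring]

theorem dpage_pageCls (hodd : ∀ m, ∀ w ∈ ParPart A m, D w ∈ ParPart A (m + 1))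
    (hDD : ∀ w, D (D w) = 0) (hp : p' = p + r) (hq : q' = q - r + 1)
    (hz : z ∈ Zcyc A D r p q) :
    dpage A D r p q p' q' hp hq (pageCls A D r p q z hz)
      = pageCls A D r p' q' (D z) (map_mem_Zcyc hodd hDD hp hq hz) := by
  subst hp hq
  change dpageCore A D r p q _ = _
  rw [dpageCore, dif_pos ⟨fun _ hx => map_mem_Zcyc hodd hDD rfl rfl hx,
    fun _ _ hx => map_mem_Bbd hDD rfl rfl hx⟩]
  rfl

end Pages

section TwistedDifferential

variable {W : Type} [Ring W] [Algebra ℝ W] {A : ℤ → Submodule ℝ W} {d : W →ₗ[ℝ] W} {H : W}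

/-- The twisted differential `D = d + H∧`. -/
def twistedDifferential (d : W →ₗ[ℝ] W) (H : W) : W →ₗ[ℝ] W :=
  d + LinearMap.mulLeft ℝ H

theorem twistedDifferential_apply (d : W →ₗ[ℝ] W) (H w : W) :
    twistedDifferential d H w = d w + H * w :=
  rfl

theorem mul_self_eq_zero_of_odd_degree
    (hgcomm : ∀ (i j : ℤ) (x y : W), x ∈ A i → y ∈ A j →
      x * y = ((-1 : ℝ) ^ (i * j)) • (y * x))
    {i : ℤ} (hi : Odd i) (hH : H ∈ A i) : H * H = 0 := by
  have hneg : H * H = -(H * H) := by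
    simpa only [(hi.mul hi).neg_one_zpow, neg_one_smul] using hgcomm i i H H hH hH
  have : IsAddTorsionFree W := .of_isTorsionFree ℝ W
  exact self_eq_neg.mp hneg

theorem twistedDifferential_twistedDifferential (hd2 : ∀ w, d (d w) = 0) {i : ℤ} (hi : Odd i)
    (hleib : ∀ w, d (H * w) = d H * w + ((-1 : ℝ) ^ i) • (H * d w))
    (hMC : d H + H * H = 0) (w : W) :
    twistedDifferential d H (twistedDifferential d H w) = 0 := by
  calc twistedDifferential d H (twistedDifferential d H w)
      = d (d w) + H * d w + (d H * w - H * d w + H * (H * w)) := by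
        simp only [twistedDifferential_apply, map_add, hleib, hi.neg_one_zpow, neg_one_smul,
          sub_eq_add_neg]
    _ = d H * w + H * (H * w) := by rw [hd2]; abel
    _ = 0 := by rw [← mul_assoc, ← add_mul, hMC, zero_mul]

theorem twistedDifferential_mem_ParPart {k : ℤ} (hk : Even k)
    (hd : ∀ i, ∀ w ∈ A i, d w ∈ A (i + 1)) (hH : ∀ i, ∀ w ∈ A i, H * w ∈ A (k + 1 + i))
    (m : ℤ) (w : W) (hw : w ∈ ParPart A m) :
    twistedDifferential d H w ∈ ParPart A (m + 1) := by
  suffices ParPart A m ≤ (ParPart A (m + 1)).comap (twistedDifferential d H) from this hw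
  refine iSup₂_le fun i hi u hu => ?_
  have him : Even (i - m) := Int.even_iff.mpr (Int.emod_eq_emod_iff_emod_sub_eq_zero.mp hi)
  refine add_mem (mem_ParPart_of_even_sub ?_ (hd i u hu)) (mem_ParPart_of_even_sub ?_ (hH i u hu))
  · rwa [add_sub_add_right_eq_sub]
  · rw [show k + 1 + i - (m + 1) = k + (i - m) by ring]
    exact hk.add him

end TwistedDifferential

section TwistedExtension

variable {W : Type} [Ring W] [Algebra ℝ W] {A : ℤ → Submodule ℝ W} {d : W →ₗ[ℝ] W} {H : W}
  {k p q : ℤ} {t r : ℕ} {y y' : ℕ → W}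

/-- The forms `y 0, …, y t` extend the closed `p`-form `y 0` to `y 0 + ⋯ + y t` in such a way that
the twisted differential `d + H∧` vanishes up to its top component. Here `H` is meant to have
degree `k + 1`. -/
structure IsTwistedExtension (A : ℤ → Submodule ℝ W) (d : W →ₗ[ℝ] W) (H : W) (k p : ℤ) (t : ℕ)
    (y : ℕ → W) : Prop where
  mem_zero : y 0 ∈ A p
  closed : d (y 0) = 0
  mem : ∀ i : ℕ, 1 ≤ i → i ≤ t → y i ∈ A (p + k * i)
  step : ∀ j : ℕ, 1 ≤ j → j ≤ t → d (y j) + H * y (j - 1) = 0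

namespace IsTwistedExtension

theorem mem_last (hy : IsTwistedExtension A d H k p t y) : y t ∈ A (p + k * t) := by
  rcases t.eq_zero_or_pos with rfl | ht
  · simpa using hy.mem_zero
  · exact hy.mem t ht le_rfl

theorem twistedDifferential_sum (hy : IsTwistedExtension A d H k p t y) :
    twistedDifferential d H (y 0 + ∑ i ∈ Finset.Icc 1 t, y i) = H * y t := by
  suffices ∀ m ≤ t, twistedDifferential d H (y 0 + ∑ i ∈ Finset.Icc 1 m, y i) = H * y m from
    this t le_rfl
  intro m hm
  induction m with
  | zero => simp [twistedDifferential_apply, hy.closed]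
  | succ m ih =>
    have hstep : d (y (m + 1)) + H * y m = 0 := hy.step (m + 1) (by omega) hm
    calc twistedDifferential d H (y 0 + ∑ i ∈ Finset.Icc 1 (m + 1), y i)
        = H * y m + (d (y (m + 1)) + H * y (m + 1)) := by
          rw [Finset.sum_Icc_succ_top (by omega), ← add_assoc, map_add, ih (by omega),
            twistedDifferential_apply]
      _ = (d (y (m + 1)) + H * y m) + H * y (m + 1) := by abel
      _ = H * y (m + 1) := by rw [hstep, zero_add]

theorem sum_mem_Zcyc (hy : IsTwistedExtension A d H k p t y) (hk : Even k) (hk0 : 0 ≤ k)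
    (hH : ∀ i, ∀ w ∈ A i, H * w ∈ A (k + 1 + i)) (hq : Even q) (hr : (r : ℤ) ≤ k * (t + 1) + 1) :
    y 0 + ∑ i ∈ Finset.Icc 1 t, y i ∈ Zcyc A (twistedDifferential d H) r p q := by
  refine mem_Zcyc_iff.mpr
    ⟨add_mem (mem_Kfil_of_le le_rfl hy.mem_zero) (sum_mem fun i hi => ?_),
      add_mem (mem_ParPart_of_even_sub (by simpa using hq) hy.mem_zero) (sum_mem fun i hi => ?_),
      ?_⟩
  · obtain ⟨h1, ht⟩ := Finset.mem_Icc.mp hi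
    exact mem_Kfil_of_le (by simpa using mul_nonneg hk0 (Nat.cast_nonneg i)) (hy.mem i h1 ht)
  · obtain ⟨h1, ht⟩ := Finset.mem_Icc.mp hi
    refine mem_ParPart_of_even_sub ?_ (hy.mem i h1 ht)
    rw [add_sub_add_left_eq_sub]
    exact (hk.mul_right _).sub hq
  · rw [hy.twistedDifferential_sum]
    exact mem_Kfil_of_le (by linarith) (hH _ _ hy.mem_last)

theorem sum_sub_sum_mem_Kfil (hy : IsTwistedExtension A d H k p t y)
    (hy' : IsTwistedExtension A d H k p t y') (hk0 : 0 < k) (h0 : y' 0 = y 0) :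
    (y 0 + ∑ i ∈ Finset.Icc 1 t, y i) - (y' 0 + ∑ i ∈ Finset.Icc 1 t, y' i)
      ∈ Kfil A (p + 1) := by
  rw [h0, add_sub_add_left_eq_sub, ← Finset.sum_sub_distrib]
  refine sum_mem fun i hi => ?_
  obtain ⟨h1, ht⟩ := Finset.mem_Icc.mp hi
  have hki : 1 ≤ k * i := one_le_mul_of_one_le_of_one_le hk0 (by exact_mod_cast h1)
  exact mem_Kfil_of_le (by linarith) (sub_mem (hy.mem i h1 ht) (hy'.mem i h1 ht))

end IsTwistedExtension

end TwistedExtension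

section RelatedCocycle

variable {W : Type} [Ring W] [Algebra ℝ W] {H : W} {y : ℕ → W} {t : ℕ} {a : ℕ → ℕ → W}

theorem relatedCocycle_eq_mul {rdeg : ℕ → ℤ} (hodd : Odd (rdeg 1))
    (hrow : ∀ j, 1 ≤ j → j ≤ t → a 1 (1 + j) = 0) :
    relatedCocycle rdeg (t + 2) a = a 1 1 * a 2 (t + 2) := by
  have hbar : barSign rdeg 1 1 = 1 := by
    simpa [barSign, masseyDeg] using (odd_one.add_odd hodd).neg_one_zpow (α := ℝ)
  rw [relatedCocycle, Finset.sum_eq_single_of_mem 1 (by simp), hbar, one_smul]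
  intro r hr hr1
  obtain ⟨h1, ht⟩ := Finset.mem_Icc.mp hr
  obtain ⟨j, rfl⟩ := Nat.exists_eq_add_of_le h1
  rw [hrow j (by omega) (by omega), smul_zero, zero_mul]

/-- The array `a` has the entries attached to the forms `y 0, …, y t` by the cup-product
description of `d_r`. Only the entries `a 1 j` and `a 2 (t + 2)` are prescribed, since no others
occur in a nonzero term of the related cocycle of the `(t + 2)`-fold product `⟨H, …, H, y 0⟩`. -/
structure IsCupProductSystem (H : W) (y : ℕ → W) (t : ℕ) (a : ℕ → ℕ → W) : Prop where
  one_one : a 1 1 = H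
  one_add : ∀ j, 1 ≤ j → j ≤ t → a 1 (1 + j) = 0
  two_last : a 2 (t + 2) = ((-1 : ℝ) ^ t) • y t

theorem IsCupProductSystem.relatedCocycle_eq (ha : IsCupProductSystem H y t a) {rdeg : ℕ → ℤ}
    (hodd : Odd (rdeg 1)) : relatedCocycle rdeg (t + 2) a = ((-1 : ℝ) ^ t) • (H * y t) := by
  rw [relatedCocycle_eq_mul hodd ha.one_add, ha.one_one, ha.two_last, mul_smul_comm]

end RelatedCocycle

section HigherDifferentials

variable {W : Type} [Ring W] [Algebra ℝ W] {A : ℤ → Submodule ℝ W} {d : W →ₗ[ℝ] W} {H : W}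
  {k p q p' q' : ℤ} {t r : ℕ} {y y' : ℕ → W} {a a' : ℕ → ℕ → W}

theorem dpage_pageCls_sum {rdeg : ℕ → ℤ} (hrdeg : Odd (rdeg 1))
    (hodd : ∀ m, ∀ w ∈ ParPart A m, twistedDifferential d H w ∈ ParPart A (m + 1))
    (hDD : ∀ w, twistedDifferential d H (twistedDifferential d H w) = 0)
    (hr : 0 < r) (hp : p' = p + r) (hq : q' = q - r + 1)
    (hy : IsTwistedExtension A d H k p t y) (ha : IsCupProductSystem H y t a)
    (hz : y 0 + ∑ i ∈ Finset.Icc 1 t, y i ∈ Zcyc A (twistedDifferential d H) r p q)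
    {zc : W} (hzc : zc ∈ Zcyc A (twistedDifferential d H) r p' q')
    (hlead : zc - relatedCocycle rdeg (t + 2) a ∈ Kfil A (p' + 1)) :
    dpage A (twistedDifferential d H) r p q p' q' hp hq (pageCls A _ r p q _ hz)
      = ((-1 : ℝ) ^ t) • pageCls A _ r p' q' zc hzc := by
  have hDsum : twistedDifferential d H (y 0 + ∑ i ∈ Finset.Icc 1 t, y i)
      = ((-1 : ℝ) ^ t) • relatedCocycle rdeg (t + 2) a := by
    rw [hy.twistedDifferential_sum, ha.relatedCocycle_eq hrdeg, smul_smul, ← mul_pow,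
      neg_one_mul, neg_neg, one_pow, one_smul]
  rw [dpage_pageCls hodd hDD]
  refine pageCls_eq_of_sub_mem_Kfil hr _ (Submodule.smul_mem _ _ hzc) ?_
  rw [hDsum, ← smul_sub, ← neg_sub zc]
  exact Submodule.smul_mem _ _ (neg_mem hlead)

theorem higher_differentials_are_massey_products_H3_general
    {rdeg : ℕ → ℤ} (hrdeg : rdeg 1 = k + 1) (hd : ∀ i, ∀ w ∈ A i, d w ∈ A (i + 1))
    (hk : Even k) (hk0 : 0 < k) (hH : ∀ i, ∀ w ∈ A i, H * w ∈ A (k + 1 + i))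
    (hDD : ∀ w, twistedDifferential d H (twistedDifferential d H w) = 0)
    (hq : Even q) (hr : (r : ℤ) = k * (t + 1) + 1) (hp' : p' = p + r) (hq' : q' = q - r + 1)
    (hy : IsTwistedExtension A d H k p t y) (hy' : IsTwistedExtension A d H k p t y')
    (h0 : y' 0 = y 0) (ha : IsCupProductSystem H y t a) (ha' : IsCupProductSystem H y' t a') :
    (∃ (hz : y 0 + ∑ i ∈ Finset.Icc 1 t, y i ∈ Zcyc A (twistedDifferential d H) r p q)
      (zc : W) (hzc : zc ∈ Zcyc A (twistedDifferential d H) r p' q'),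
      zc - relatedCocycle rdeg (t + 2) a ∈ Kfil A (p' + 1) ∧
      dpage A (twistedDifferential d H) r p q p' q' hp' hq' (pageCls A _ r p q _ hz)
        = ((-1 : ℝ) ^ t) • pageCls A _ r p' q' zc hzc) ∧
    (∀ (zc zc' : W)
      (hzc : zc ∈ Zcyc A (twistedDifferential d H) r p' q')
      (hzc' : zc' ∈ Zcyc A (twistedDifferential d H) r p' q'),
      zc - relatedCocycle rdeg (t + 2) a ∈ Kfil A (p' + 1) →
      zc' - relatedCocycle rdeg (t + 2) a' ∈ Kfil A (p' + 1) →
      pageCls A _ r p' q' zc hzc = pageCls A _ r p' q' zc' hzc') := by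
  have hr0 : 0 < r := by
    have : 0 < k * (t + 1 : ℤ) := by positivity
    omega
  have hrodd : Odd (rdeg 1) := hrdeg ▸ hk.add_one
  have hodd := twistedDifferential_mem_ParPart hk hd hH
  have hz := hy.sum_mem_Zcyc hk hk0.le hH hq hr.le
  have hz' := hy'.sum_mem_Zcyc hk hk0.le hH hq hr.le
  constructor
  · have hzc : relatedCocycle rdeg (t + 2) a ∈ Zcyc A (twistedDifferential d H) r p' q' := by
      rw [ha.relatedCocycle_eq hrodd, ← hy.twistedDifferential_sum]
      exact Submodule.smul_mem _ _ (map_mem_Zcyc hodd hDD hp' hq' hz)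
    exact ⟨hz, _, hzc, by simp,
      dpage_pageCls_sum hrodd hodd hDD hr0 hp' hq' hy ha hz hzc (by simp)⟩
  · intro zc zc' hzc hzc' hlead hlead'
    have hsign : IsUnit ((-1 : ℝ) ^ t) := isUnit_one.neg.pow t
    rw [← hsign.smul_left_cancel,
      ← dpage_pageCls_sum hrodd hodd hDD hr0 hp' hq' hy ha hz hzc hlead,
      ← dpage_pageCls_sum hrodd hodd hDD hr0 hp' hq' hy' ha' hz' hzc' hlead',
      pageCls_eq_of_sub_mem_Kfil hr0 hz hz' (hy.sum_sub_sum_mem_Kfil hy' hk0 h0)]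

end HigherDifferentials

/-- the Atiyah–Segal description; Corollary 5.8 of the paper. For
`H = H_3` only and a class `[x_p]_{2t+3} ∈ E_{2t+3}^{p,q}` (`t ≥ 1`) represented by the
closed `p`-form `x`,
`d_{2t+3}[x_p]_{2t+3} = (-1)^t [⟨H_3, …, H_3, x_p⟩_A]_{2t+3}` where `⟨H_3, …, H_3, x_p⟩_A`
(`t+1` copies of `H_3`) is the specific element `[c(A)]` of the `(t+2)`-fold Massey product
for a defining system `A` obtained from the cup-product description of `d_{2t+3}` (built from
forms `xs i` with `d(xs i) + H_3 ∧ xs(i-1) = 0`), and this class in `E_{2t+3}` is independent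
of the choice of such a defining system. -/
theorem higher_differentials_are_massey_products_H3 {W : Type} [Ring W] [Algebra ℝ W]
    (n : ℕ) (A : ℤ → Submodule ℝ W) [DirectSum.Decomposition A]
    (hbound : ∀ i : ℤ, i < 0 ∨ (n : ℤ) < i → A i = ⊥)
    (hmul : ∀ (i j : ℤ) (x y : W), x ∈ A i → y ∈ A j → x * y ∈ A (i + j))
    (d : W →ₗ[ℝ] W)
    (hdmem : ∀ i : ℤ, ∀ x ∈ A i, d x ∈ A (i + 1))
    (hd2 : ∀ x : W, d (d x) = 0)
    (hleib : ∀ (i : ℤ) (x y : W), x ∈ A i →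
      d (x * y) = d x * y + ((-1 : ℝ) ^ i) • (x * d y))
    (hgcomm : ∀ (i j : ℤ) (x y : W), x ∈ A i → y ∈ A j →
      x * y = ((-1 : ℝ) ^ (i * j)) • (y * x))
    (H3 : W) (hH3mem : H3 ∈ A 3) (hH3cl : d H3 = 0)
    (D : W →ₗ[ℝ] W) (hD : ∀ w : W, D w = d w + H3 * w)
    (t : ℕ) (ht : 1 ≤ t) (p q : ℤ) (hq : q % 2 = 0)
    (x : W) (hxp : x ∈ A p) (hxd : d x = 0)
    (xs xs' : ℕ → W) (hxs0 : xs 0 = x) (hxs0' : xs' 0 = x)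
    (hxsm : ∀ i : ℕ, 1 ≤ i → i ≤ t → xs i ∈ A (p + 2 * i))
    (hxsm' : ∀ i : ℕ, 1 ≤ i → i ≤ t → xs' i ∈ A (p + 2 * i))
    (heq : ∀ j : ℕ, 1 ≤ j → j ≤ t → d (xs j) + H3 * xs (j - 1) = 0)
    (heq' : ∀ j : ℕ, 1 ≤ j → j ≤ t → d (xs' j) + H3 * xs' (j - 1) = 0)
    (a a' : ℕ → ℕ → W)
    (ha1 : ∀ i : ℕ, 1 ≤ i → i ≤ t + 1 → a i i = H3)
    (ha1b : ∀ i k : ℕ, 1 ≤ i → 1 ≤ k → i + k ≤ t + 1 → a i (i + k) = 0)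
    (ha2 : ∀ i : ℕ, 2 ≤ i → i ≤ t + 1 →
      a i (t + 2) = ((-1 : ℝ) ^ (t + 2 - i)) • xs (t + 2 - i))
    (ha3 : a (t + 2) (t + 2) = x)
    (ha1' : ∀ i : ℕ, 1 ≤ i → i ≤ t + 1 → a' i i = H3)
    (ha1b' : ∀ i k : ℕ, 1 ≤ i → 1 ≤ k → i + k ≤ t + 1 → a' i (i + k) = 0)
    (ha2' : ∀ i : ℕ, 2 ≤ i → i ≤ t + 1 →
      a' i (t + 2) = ((-1 : ℝ) ^ (t + 2 - i)) • xs' (t + 2 - i))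
    (ha3' : a' (t + 2) (t + 2) = x) :
    (∃ (hz : x + ∑ i ∈ Finset.Icc 1 t, xs i ∈ Zcyc A D (2 * t + 3) p q)
      (zc : W) (hzc : zc ∈ Zcyc A D (2 * t + 3) (p + 2 * t + 3) (q - 2 * t - 2)),
      zc - relatedCocycle (fun i => if i ≤ t + 1 then (3 : ℤ) else p) (t + 2) a
          ∈ Kfil A (p + 2 * t + 4) ∧
      dpage A D (2 * t + 3) p q (p + 2 * t + 3) (q - 2 * t - 2)
          (by push_cast; ring) (by push_cast; ring)
          (pageCls A D (2 * t + 3) p q (x + ∑ i ∈ Finset.Icc 1 t, xs i) hz)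
        = ((-1 : ℝ) ^ t) •
            pageCls A D (2 * t + 3) (p + 2 * t + 3) (q - 2 * t - 2) zc hzc) ∧
    (∀ (zc zc' : W)
      (hzc : zc ∈ Zcyc A D (2 * t + 3) (p + 2 * t + 3) (q - 2 * t - 2))
      (hzc' : zc' ∈ Zcyc A D (2 * t + 3) (p + 2 * t + 3) (q - 2 * t - 2)),
      zc - relatedCocycle (fun i => if i ≤ t + 1 then (3 : ℤ) else p) (t + 2) a
          ∈ Kfil A (p + 2 * t + 4) →
      zc' - relatedCocycle (fun i => if i ≤ t + 1 then (3 : ℤ) else p) (t + 2) a'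
          ∈ Kfil A (p + 2 * t + 4) →
      pageCls A D (2 * t + 3) (p + 2 * t + 3) (q - 2 * t - 2) zc hzc
        = pageCls A D (2 * t + 3) (p + 2 * t + 3) (q - 2 * t - 2) zc' hzc') := by
  obtain rfl : D = twistedDifferential d H3 := LinearMap.ext hD
  subst hxs0
  have hodd : Odd (3 : ℤ) := by decide
  have hMC : d H3 + H3 * H3 = 0 := by
    rw [hH3cl, zero_add, mul_self_eq_zero_of_odd_degree hgcomm hodd hH3mem]
  have hDD := twistedDifferential_twistedDifferential hd2 hodd (fun w => hleib 3 H3 w hH3mem) hMC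
  have hy : IsTwistedExtension A d H3 2 p t xs := ⟨hxp, hxd, hxsm, heq⟩
  have hy' : IsTwistedExtension A d H3 2 p t xs' :=
    ⟨hxs0' ▸ hxp, hxs0' ▸ hxd, hxsm', heq'⟩
  have ha : IsCupProductSystem H3 xs t a :=
    ⟨ha1 1 le_rfl (by omega), fun j hj _ => ha1b 1 j le_rfl hj (by omega),
      ha2 2 le_rfl (by omega)⟩
  have ha' : IsCupProductSystem H3 xs' t a' :=
    ⟨ha1' 1 le_rfl (by omega), fun j hj _ => ha1b' 1 j le_rfl hj (by omega),
      ha2' 2 le_rfl (by omega)⟩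
  rw [show p + 2 * (t : ℤ) + 4 = p + 2 * t + 3 + 1 by ring]
  exact higher_differentials_are_massey_products_H3_general (by simp) hdmem even_two two_pos
    (fun i w hw => hmul 3 i H3 w hH3mem hw) hDD (Int.even_iff.mpr hq) (by push_cast; ring)
    (by push_cast; ring) (by push_cast; ring) hy hy' hxs0' ha ha'
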